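/- arXiv:1207.0730 — 7 statements merged into one kernel-verified Lean document; each statement's English description precedes it below -/
import Mathlib

section
/- Let λ > 0 and let X and Y be independent random variables, each with distribution function F(x) = x^λ for x ∈ (0,1) (the power function distribution). Then the random variable min(X/Y, Y/X) also has distribution function F(x) = x^λ on (0,1); in particular, for X, Y independent uniform on (0,1), P{min(X/Y, Y/X) < s} = s for all s ∈ [0,1]. -/
open MeasureTheory ProbabilityTheory Set

/-!
Almost surely `min (X / Y) (Y / X) < s` says that `X < s * Y` or `Y < s * X`, and for `s ≤ 1` these
events are disjoint. Conditioning on `Y` gives `P(X < s * Y) = s ^ a * E[Y ^ a]`, because `s * Y`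
stays in the interval where the distribution function of `X` is the power `a`. If `Y` has
distribution function `x ^ b`, the layer cake formula gives `E[Y ^ a] = b / (a + b)`, so the two
events have total probability `(b * s ^ a + a * s ^ b) / (a + b)`.
-/

open Filter Topology

section

variable {Ω : Type*} [MeasurableSpace Ω] {μ : Measure Ω} {X Y : Ω → ℝ} {a b p s : ℝ}

theorem measure_prodMk_mem_eq_lintegral_of_indepFun {α β : Type*} [MeasurableSpace α]
    [MeasurableSpace β] [IsFiniteMeasure μ] {f : Ω → α} {g : Ω → β} (hf : AEMeasurable f μ)
    (hg : AEMeasurable g μ) (hfg : f ⟂ᵢ[μ] g) {S : Set (α × β)} (hS : MeasurableSet S) :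
    μ {ω | (f ω, g ω) ∈ S} = ∫⁻ ω, μ {ω' | (f ω', g ω) ∈ S} ∂μ := by
  calc μ {ω | (f ω, g ω) ∈ S}
      = (μ.map fun ω ↦ (f ω, g ω)) S := (Measure.map_apply_of_aemeasurable (hf.prodMk hg) hS).symm
    _ = ∫⁻ y, μ.map f ((fun x ↦ (x, y)) ⁻¹' S) ∂μ.map g := by
      rw [hfg.map_prod_eq_prod_map_map hf hg, Measure.prod_apply_symm hS]
    _ = ∫⁻ ω, μ.map f ((fun x ↦ (x, g ω)) ⁻¹' S) ∂μ :=
      lintegral_map' (measurable_measure_prodMk_right hS).aemeasurable hg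
    _ = ∫⁻ ω, μ {ω' | (f ω', g ω) ∈ S} ∂μ :=
      lintegral_congr fun ω ↦ Measure.map_apply_of_aemeasurable hf (measurable_prodMk_right hS)

theorem lintegral_one_sub_rpow_mul_rpow (hb : 0 < b) (hp : 0 < p) :
    ∫⁻ t in Ioo (0 : ℝ) 1, ENNReal.ofReal ((1 - t ^ b) * t ^ (p - 1)) =
      ENNReal.ofReal (b / (p * (p + b))) := by
  have expand : EqOn (fun t : ℝ ↦ (1 - t ^ b) * t ^ (p - 1))
      (fun t ↦ t ^ (p - 1) - t ^ (b + p - 1)) (Ioo 0 1) := fun t ht ↦ by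
    simp only [add_sub_assoc, Real.rpow_add ht.1]
    ring
  have integrable_left : IntervalIntegrable (fun t : ℝ ↦ t ^ (p - 1)) volume 0 1 :=
    intervalIntegral.intervalIntegrable_rpow' (by linarith)
  have integrable_right : IntervalIntegrable (fun t : ℝ ↦ t ^ (b + p - 1)) volume 0 1 :=
    intervalIntegral.intervalIntegrable_rpow' (by linarith)
  have integrable : IntegrableOn (fun t : ℝ ↦ (1 - t ^ b) * t ^ (p - 1)) (Ioo 0 1) :=
    ((intervalIntegrable_iff_integrableOn_Ioo_of_le zero_le_one).1
      (integrable_left.sub integrable_right)).congr_fun expand.symm measurableSet_Ioo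
  have nonneg : ∀ᵐ t ∂volume.restrict (Ioo (0 : ℝ) 1), 0 ≤ (1 - t ^ b) * t ^ (p - 1) :=
    ae_restrict_of_forall_mem measurableSet_Ioo fun t ht ↦
      mul_nonneg (sub_nonneg.2 (Real.rpow_le_one ht.1.le ht.2.le hb.le))
        (Real.rpow_nonneg ht.1.le _)
  rw [← ofReal_integral_eq_lintegral_ofReal integrable nonneg,
    setIntegral_congr_fun measurableSet_Ioo expand, ← integral_Ioc_eq_integral_Ioo,
    ← intervalIntegral.integral_of_le zero_le_one,
    intervalIntegral.integral_sub integrable_left integrable_right,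
    integral_rpow (.inl (by linarith)), integral_rpow (.inl (by linarith))]
  simp only [sub_add_cancel, Real.one_rpow, Real.zero_rpow hp.ne',
    Real.zero_rpow (add_pos hb hp).ne']
  congr 1
  field_simp
  ring

/-- `X` has the power function distribution with parameter `a` under `μ`: its distribution function
is `s ↦ s ^ a` on `(0, 1)`. The distribution function is taken in the form `μ {X < s}`; since the
power function is continuous this agrees with `μ {X ≤ s}`. -/
def HasPowerFunctionLaw (X : Ω → ℝ) (a : ℝ) (μ : Measure Ω) : Prop :=
  ∀ s ∈ Ioo (0 : ℝ) 1, μ {ω | X ω < s} = ENNReal.ofReal (s ^ a)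

namespace HasPowerFunctionLaw

theorem ae_pos (hX : HasPowerFunctionLaw X a μ) (ha : 0 < a) : ∀ᵐ ω ∂μ, 0 < X ω := by
  have bound : ∀ᶠ s in 𝓝[>] (0 : ℝ), μ {ω | ¬ 0 < X ω} ≤ ENNReal.ofReal (s ^ a) := by
    filter_upwards [Ioo_mem_nhdsGT zero_lt_one] with s hs
    rw [← hX s hs]
    exact measure_mono fun ω hω ↦ (not_lt.1 hω).trans_lt hs.1
  have limit : Tendsto (fun s : ℝ ↦ ENNReal.ofReal (s ^ a)) (𝓝[>] 0) (𝓝 0) := by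
    have continuous : Continuous fun s : ℝ ↦ ENNReal.ofReal (s ^ a) :=
      ENNReal.continuous_ofReal.comp (Real.continuous_rpow_const ha.le)
    simpa only [Real.zero_rpow ha.ne', ENNReal.ofReal_zero] using
      (continuous.tendsto 0).mono_left nhdsWithin_le_nhds
  exact ae_iff.2 (nonpos_iff_eq_zero.1 (ge_of_tendsto limit bound))

theorem ae_lt_one [IsProbabilityMeasure μ] (hX : HasPowerFunctionLaw X a μ)
    (hXm : AEMeasurable X μ) : ∀ᵐ ω ∂μ, X ω < 1 := by
  have bound : ∀ᶠ s in 𝓝[<] (1 : ℝ), ENNReal.ofReal (s ^ a) ≤ μ {ω | X ω < 1} := by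
    filter_upwards [Ioo_mem_nhdsLT zero_lt_one] with s hs
    rw [← hX s hs]
    exact measure_mono fun ω hω ↦ lt_trans hω hs.2
  have limit : Tendsto (fun s : ℝ ↦ ENNReal.ofReal (s ^ a)) (𝓝[<] 1) (𝓝 1) := by
    have continuousAt : ContinuousAt (fun s : ℝ ↦ ENNReal.ofReal (s ^ a)) 1 :=
      ENNReal.continuous_ofReal.continuousAt.comp
        (Real.continuousAt_rpow_const 1 a (.inl one_ne_zero))
    simpa only [Real.one_rpow, ENNReal.ofReal_one] using
      continuousAt.tendsto.mono_left nhdsWithin_le_nhds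
  exact (mem_ae_iff_prob_eq_one₀ (nullMeasurableSet_lt hXm aemeasurable_const)).2
    (prob_le_one.antisymm (le_of_tendsto limit bound))

theorem ae_mem_Ioo [IsProbabilityMeasure μ] (hX : HasPowerFunctionLaw X a μ) (ha : 0 < a)
    (hXm : AEMeasurable X μ) : ∀ᵐ ω ∂μ, X ω ∈ Ioo 0 1 :=
  (hX.ae_pos ha).and (hX.ae_lt_one hXm)

theorem measure_lt_of_mem_Ico (hX : HasPowerFunctionLaw X a μ) (ha : 0 < a) (hs : s ∈ Ico 0 1) :
    μ {ω | X ω < s} = ENNReal.ofReal (s ^ a) := by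
  rcases hs.1.eq_or_lt with rfl | hs_pos
  · rw [Real.zero_rpow ha.ne', ENNReal.ofReal_zero, measure_eq_zero_iff_ae_notMem]
    filter_upwards [hX.ae_pos ha] with ω hω using hω.not_gt
  · exact hX s ⟨hs_pos, hs.2⟩

theorem measure_ge [IsProbabilityMeasure μ] (hX : HasPowerFunctionLaw X a μ)
    (hXm : AEMeasurable X μ) (hs : s ∈ Ioo 0 1) :
    μ {ω | s ≤ X ω} = ENNReal.ofReal (1 - s ^ a) := by
  have compl : {ω | s ≤ X ω} = {ω | X ω < s}ᶜ := by simp only [compl_ofPred, not_lt]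
  rw [compl, prob_compl_eq_one_sub₀ (nullMeasurableSet_lt hXm aemeasurable_const), hX s hs,
    ENNReal.ofReal_sub _ (Real.rpow_nonneg hs.1.le a), ENNReal.ofReal_one]

theorem measure_ge_eq_zero [IsProbabilityMeasure μ] (hX : HasPowerFunctionLaw X a μ)
    (hXm : AEMeasurable X μ) (hs : 1 ≤ s) : μ {ω | s ≤ X ω} = 0 := by
  rw [measure_eq_zero_iff_ae_notMem]
  filter_upwards [hX.ae_lt_one hXm] with ω hω using (hω.trans_le hs).not_ge

theorem lintegral_rpow [IsProbabilityMeasure μ] (hY : HasPowerFunctionLaw Y b μ) (hb : 0 < b)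
    (hYm : AEMeasurable Y μ) (hp : 0 < p) :
    ∫⁻ ω, ENNReal.ofReal (Y ω ^ p) ∂μ = ENNReal.ofReal (b / (p + b)) := by
  have tail_Ici : EqOn (fun t ↦ μ {ω | t ≤ Y ω} * ENNReal.ofReal (t ^ (p - 1))) 0 (Ici 1) :=
    fun t ht ↦ by simp only [hY.measure_ge_eq_zero hYm ht, zero_mul, Pi.zero_apply]
  have tail_Ioo : EqOn (fun t ↦ μ {ω | t ≤ Y ω} * ENNReal.ofReal (t ^ (p - 1)))
      (fun t ↦ ENNReal.ofReal ((1 - t ^ b) * t ^ (p - 1))) (Ioo 0 1) := fun t ht ↦ by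
    simp only [hY.measure_ge hYm ht,
      ENNReal.ofReal_mul (sub_nonneg.2 (Real.rpow_le_one ht.1.le ht.2.le hb.le))]
  calc ∫⁻ ω, ENNReal.ofReal (Y ω ^ p) ∂μ
      = ENNReal.ofReal p * ∫⁻ t in Ioi 0, μ {ω | t ≤ Y ω} * ENNReal.ofReal (t ^ (p - 1)) :=
        lintegral_rpow_eq_lintegral_meas_le_mul μ ((hY.ae_pos hb).mono fun _ ↦ le_of_lt) hYm hp
    _ = ENNReal.ofReal p * ∫⁻ t in Ioo 0 1, μ {ω | t ≤ Y ω} * ENNReal.ofReal (t ^ (p - 1)) := by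
        rw [← Ioo_union_Ici_eq_Ioi zero_lt_one, lintegral_union measurableSet_Ici
          (disjoint_left.2 fun _ ht ↦ ht.2.not_ge),
          setLIntegral_eq_zero measurableSet_Ici tail_Ici, add_zero]
    _ = ENNReal.ofReal p * ENNReal.ofReal (b / (p * (p + b))) := by
        rw [setLIntegral_congr_fun measurableSet_Ioo tail_Ioo,
          lintegral_one_sub_rpow_mul_rpow hb hp]
    _ = ENNReal.ofReal (b / (p + b)) := by
        rw [← ENNReal.ofReal_mul hp.le]
        congr 1
        field_simp

theorem measure_lt_mul [IsFiniteMeasure μ] (hX : HasPowerFunctionLaw X a μ) (ha : 0 < a)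
    (hXm : AEMeasurable X μ) (hYm : AEMeasurable Y μ) (hXY : X ⟂ᵢ[μ] Y)
    (hY : ∀ᵐ ω ∂μ, Y ω ∈ Ioo 0 1) (hs : s ∈ Icc 0 1) :
    μ {ω | X ω < s * Y ω} = ENNReal.ofReal (s ^ a) * ∫⁻ ω, ENNReal.ofReal (Y ω ^ a) ∂μ := by
  have measurableSet : MeasurableSet {z : ℝ × ℝ | z.1 < s * z.2} :=
    measurableSet_lt measurable_fst (measurable_snd.const_mul s)
  calc μ {ω | X ω < s * Y ω}
      = ∫⁻ ω, μ {ω' | X ω' < s * Y ω} ∂μ :=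
        measure_prodMk_mem_eq_lintegral_of_indepFun hXm hYm hXY measurableSet
    _ = ∫⁻ ω, ENNReal.ofReal (s ^ a) * ENNReal.ofReal (Y ω ^ a) ∂μ := by
        refine lintegral_congr_ae ?_
        filter_upwards [hY] with ω hω
        have mem_Ico : s * Y ω ∈ Ico 0 1 :=
          ⟨mul_nonneg hs.1 hω.1.le, mul_lt_one_of_nonneg_of_lt_one_right hs.2 hω.1.le hω.2⟩
        rw [hX.measure_lt_of_mem_Ico ha mem_Ico, Real.mul_rpow hs.1 hω.1.le,
          ENNReal.ofReal_mul (Real.rpow_nonneg hs.1 a)]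
    _ = ENNReal.ofReal (s ^ a) * ∫⁻ ω, ENNReal.ofReal (Y ω ^ a) ∂μ :=
        lintegral_const_mul' _ _ ENNReal.ofReal_ne_top

end HasPowerFunctionLaw

theorem measure_min_div_div_lt (hXm : AEMeasurable X μ) (hYm : AEMeasurable Y μ)
    (hX : ∀ᵐ ω ∂μ, 0 < X ω) (hY : ∀ᵐ ω ∂μ, 0 < Y ω) (hs : s ≤ 1) :
    μ {ω | min (X ω / Y ω) (Y ω / X ω) < s} = μ {ω | X ω < s * Y ω} + μ {ω | Y ω < s * X ω} := by
  have eq_union : {ω | min (X ω / Y ω) (Y ω / X ω) < s} =ᵐ[μ]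
      ({ω | X ω < s * Y ω} ∪ {ω | Y ω < s * X ω} : Set Ω) := by
    filter_upwards [hX, hY] with ω hXω hYω
    exact propext (min_lt_iff.trans (or_congr (div_lt_iff₀ hYω) (div_lt_iff₀ hXω)))
  have disjoint : AEDisjoint μ {ω | X ω < s * Y ω} {ω | Y ω < s * X ω} := by
    refine measure_eq_zero_iff_ae_notMem.2 ?_
    filter_upwards [hX, hY] with ω hXω hYω ⟨hXY, hYX⟩
    exact lt_asymm (hXY.trans_le (mul_le_of_le_one_left hYω.le hs))
      (hYX.trans_le (mul_le_of_le_one_left hXω.le hs))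
  rw [measure_congr eq_union,
    measure_union₀ (nullMeasurableSet_lt hYm (hXm.const_mul s)) disjoint]

theorem puri_rubin_power_distribution_general [IsProbabilityMeasure μ] (ha : 0 < a) (hb : 0 < b)
    (hXm : AEMeasurable X μ) (hYm : AEMeasurable Y μ) (hXY : X ⟂ᵢ[μ] Y)
    (hX : HasPowerFunctionLaw X a μ) (hY : HasPowerFunctionLaw Y b μ) (hs : s ∈ Icc 0 1) :
    μ {ω | min (X ω / Y ω) (Y ω / X ω) < s} =
      ENNReal.ofReal ((b * s ^ a + a * s ^ b) / (a + b)) := by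
  have sa_nonneg : 0 ≤ s ^ a := Real.rpow_nonneg hs.1 a
  have sb_nonneg : 0 ≤ s ^ b := Real.rpow_nonneg hs.1 b
  rw [measure_min_div_div_lt hXm hYm (hX.ae_pos ha) (hY.ae_pos hb) hs.2,
    hX.measure_lt_mul ha hXm hYm hXY (hY.ae_mem_Ioo hb hYm) hs,
    hY.measure_lt_mul hb hYm hXm hXY.symm (hX.ae_mem_Ioo ha hXm) hs,
    hY.lintegral_rpow hb hYm ha, hX.lintegral_rpow ha hXm hb,
    ← ENNReal.ofReal_mul sa_nonneg, ← ENNReal.ofReal_mul sb_nonneg,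
    ← ENNReal.ofReal_add (by positivity) (by positivity), add_comm b a]
  congr 1
  ring

end

/-- **Puri–Rubin characterization (direct part).**
If `X` and `Y` are independent random variables, each with the power function
distribution function `F(x) = x ^ lam` on `(0,1)` (for some `lam > 0`), then
`min (X/Y) (Y/X)` also has distribution function `x ^ lam` on `(0,1)`.
In particular, for `lam = 1` (the uniform case), `P(min(X/Y, Y/X) < s) = s`. -/
theorem puri_rubin_power_distribution
    {Ω : Type*} [MeasureSpace Ω] [IsProbabilityMeasure (ℙ : Measure Ω)]
    (lam : ℝ) (hlam : 0 < lam) (X Y : Ω → ℝ)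
    (hXm : Measurable X) (hYm : Measurable Y)
    (hIndep : IndepFun X Y ℙ)
    (hXsupp : ∀ᵐ ω ∂ℙ, X ω ∈ Ioo (0 : ℝ) 1)
    (hYsupp : ∀ᵐ ω ∂ℙ, Y ω ∈ Ioo (0 : ℝ) 1)
    (hXcdf : ∀ s ∈ Ioo (0 : ℝ) 1, ℙ {ω | X ω < s} = ENNReal.ofReal (s ^ lam))
    (hYcdf : ∀ s ∈ Ioo (0 : ℝ) 1, ℙ {ω | Y ω < s} = ENNReal.ofReal (s ^ lam)) :
    ∀ s ∈ Ioo (0 : ℝ) 1,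
      ℙ {ω | min (X ω / Y ω) (Y ω / X ω) < s} = ENNReal.ofReal (s ^ lam) := by
  intro s hs
  rw [puri_rubin_power_distribution_general hlam hlam hXm.aemeasurable hYm.aemeasurable hIndep
    hXcdf hYcdf (Ioo_subset_Icc_self hs)]
  congr 1
  field_simp
end

section
/- Let Y and Z be independent random variables, each uniformly distributed on (0,1). Then for every s ∈ (0,1), P{min(s/Y, Y/s) < Z} = 1 + s·ln(s) − s/2. -/
open MeasureTheory ProbabilityTheory Set

/-! If `W` takes values in `[0,1]` and `Z` is uniform on `(0,1)` and independent of `W`, then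
`P(W < Z) = 1 - E[W]`: condition on `W` and use `P(w < Z) = 1 - w`. Take `W = min (s/Y) (Y/s)`.
The minimum is `Y/s` when `Y ≤ s` and `s/Y` otherwise, so `E[W] = ∫₀ˢ y/s dy + ∫ₛ¹ s/y dy`. -/

section Independence

variable {Ω : Type*} [MeasurableSpace Ω] {μ : Measure Ω}

theorem measure_lt_eq_lintegral_measure_Ioi {α : Type*} [LinearOrder α] [TopologicalSpace α]
    [OrderClosedTopology α] [SecondCountableTopology α] [MeasurableSpace α]
    [OpensMeasurableSpace α] [IsFiniteMeasure μ] {W Z : Ω → α}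
    (hW : AEMeasurable W μ) (hZ : AEMeasurable Z μ) (hWZ : IndepFun W Z μ) :
    μ {ω | W ω < Z ω} = ∫⁻ ω, μ.map Z (Ioi (W ω)) ∂μ := by
  have hlt : MeasurableSet {p : α × α | p.1 < p.2} := measurableSet_lt measurable_fst measurable_snd
  have hjoint : μ.map (fun ω ↦ (W ω, Z ω)) = (μ.map W).prod (μ.map Z) :=
    (indepFun_iff_map_prod_eq_prod_map_map hW hZ).1 hWZ
  calc μ {ω | W ω < Z ω}
      = (μ.map W).prod (μ.map Z) {p | p.1 < p.2} := by
        rw [← hjoint, Measure.map_apply_of_aemeasurable (hW.prodMk hZ) hlt, preimage_ofPred_eq]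
    _ = ∫⁻ w, μ.map Z (Ioi w) ∂μ.map W := Measure.prod_apply hlt
    _ = ∫⁻ ω, μ.map Z (Ioi (W ω)) ∂μ :=
        lintegral_map' (measurable_measure_prodMk_left hlt).aemeasurable hW

theorem volume_restrict_Ioo_Ioi {a b x : ℝ} (hax : a ≤ x) :
    volume.restrict (Ioo a b) (Ioi x) = ENNReal.ofReal (b - x) := by
  rw [Measure.restrict_apply measurableSet_Ioi, inter_comm, Ioo_inter_Ioi, max_eq_right hax,
    Real.volume_Ioo]

theorem measure_lt_uniform_eq_one_sub_integral [IsProbabilityMeasure μ] {W Z : Ω → ℝ}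
    (hW : AEMeasurable W μ) (hZ : AEMeasurable Z μ) (hWZ : IndepFun W Z μ)
    (hZ_unif : μ.map Z = volume.restrict (Ioo (0 : ℝ) 1)) (hW_mem : ∀ᵐ ω ∂μ, W ω ∈ Icc 0 1) :
    μ {ω | W ω < Z ω} = ENNReal.ofReal (1 - ∫ ω, W ω ∂μ) := by
  have hW_int : Integrable W μ := .of_mem_Icc 0 1 hW hW_mem
  calc μ {ω | W ω < Z ω}
      = ∫⁻ ω, volume.restrict (Ioo (0 : ℝ) 1) (Ioi (W ω)) ∂μ := by
        rw [measure_lt_eq_lintegral_measure_Ioi hW hZ hWZ, hZ_unif]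
    _ = ∫⁻ ω, ENNReal.ofReal (1 - W ω) ∂μ :=
        lintegral_congr_ae (hW_mem.mono fun _ hω ↦ volume_restrict_Ioo_Ioi hω.1)
    _ = ENNReal.ofReal (∫ ω, (1 - W ω) ∂μ) :=
        (ofReal_integral_eq_lintegral_ofReal ((integrable_const 1).sub hW_int)
          (hW_mem.mono fun _ hω ↦ sub_nonneg.2 hω.2)).symm
    _ = ENNReal.ofReal (1 - ∫ ω, W ω ∂μ) := by
        rw [integral_sub (integrable_const 1) hW_int, integral_const, probReal_univ, one_smul]

end Independence

section MinRatio

variable {K : Type*} [Field K] [LinearOrder K] [IsStrictOrderedRing K] {a b : K}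

theorem min_div_div_eq_of_le (ha : 0 < a) (hab : a ≤ b) : min (b / a) (a / b) = a / b :=
  min_eq_right <| (div_le_one_of_le₀ hab (ha.le.trans hab)).trans ((one_le_div ha).2 hab)

theorem min_div_div_mem_Icc (ha : 0 < a) (hb : 0 < b) : min (b / a) (a / b) ∈ Icc 0 1 := by
  refine ⟨le_min (div_pos hb ha).le (div_pos ha hb).le, ?_⟩
  rcases le_total a b with hab | hba
  · exact min_le_of_right_le (div_le_one_of_le₀ hab hb.le)
  · exact min_le_of_left_le (div_le_one_of_le₀ hba ha.le)

end MinRatio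

section Integral

variable {s t : ℝ}

theorem intervalIntegrable_min_div_div (hs : 0 < s) (ht : 0 ≤ t) :
    IntervalIntegrable (fun y ↦ min (s / y) (y / s)) volume 0 t := by
  rw [intervalIntegrable_iff_integrableOn_Ioc_of_le ht]
  exact .of_mem_Icc 0 1 (by fun_prop) <| ae_restrict_of_forall_mem measurableSet_Ioc
    fun _ hy ↦ min_div_div_mem_Icc hy.1 hs

theorem integral_min_div_div_zero_self (hs : 0 < s) :
    ∫ y in 0..s, min (s / y) (y / s) = s / 2 :=
  calc ∫ y in 0..s, min (s / y) (y / s)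
      = ∫ y in 0..s, y / s :=
        intervalIntegral.integral_congr_Ioo_of_le hs.le
          fun _ hy ↦ min_div_div_eq_of_le hy.1 hy.2.le
    _ = s / 2 := by
        rw [intervalIntegral.integral_div, integral_id]
        field

theorem integral_min_div_div_of_le (hs : 0 < s) (hst : s ≤ t) :
    ∫ y in s..t, min (s / y) (y / s) = s * Real.log (t / s) :=
  calc ∫ y in s..t, min (s / y) (y / s)
      = ∫ y in s..t, s * y⁻¹ :=
        intervalIntegral.integral_congr_Ioo_of_le hst fun y hy ↦ by
          rw [min_comm, min_div_div_eq_of_le hs hy.1.le, div_eq_mul_inv]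
    _ = s * Real.log (t / s) := by
        rw [intervalIntegral.integral_const_mul, integral_inv_of_pos hs (hs.trans_le hst)]

theorem integral_min_div_div (hs : 0 < s) (hst : s ≤ t) :
    ∫ y in 0..t, min (s / y) (y / s) = s / 2 + s * Real.log (t / s) := by
  have h0s := intervalIntegrable_min_div_div hs hs.le
  have h0t := intervalIntegrable_min_div_div hs (hs.le.trans hst)
  rw [← intervalIntegral.integral_add_adjacent_intervals h0s (h0s.symm.trans h0t),
    integral_min_div_div_zero_self hs, integral_min_div_div_of_le hs hst]

theorem integral_min_div_div_of_map_eq_uniform {Ω : Type*} [MeasurableSpace Ω] {μ : Measure Ω}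
    {Y : Ω → ℝ} (hY : AEMeasurable Y μ) (hY_unif : μ.map Y = volume.restrict (Ioo (0 : ℝ) 1))
    (hs : 0 < s) (hs1 : s ≤ 1) :
    ∫ ω, min (s / Y ω) (Y ω / s) ∂μ = s / 2 - s * Real.log s :=
  calc ∫ ω, min (s / Y ω) (Y ω / s) ∂μ
      = ∫ y, min (s / y) (y / s) ∂μ.map Y := by rw [integral_map hY (by fun_prop)]
    _ = ∫ y in 0..1, min (s / y) (y / s) := by
        rw [hY_unif, intervalIntegral.integral_of_le zero_le_one, integral_Ioc_eq_integral_Ioo]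
    _ = s / 2 - s * Real.log s := by
        rw [integral_min_div_div hs hs1, one_div, Real.log_inv, mul_neg, sub_eq_add_neg]

end Integral

/-- If `Y` and `Z` are independent random variables, each uniformly distributed on `(0,1)`,
then for every `s ∈ (0,1)`, `P(min(s/Y, Y/s) < Z) = 1 + s·ln s − s/2`. -/
theorem prob_min_ratio_lt_uniform
    {Ω : Type*} [MeasureSpace Ω] [IsProbabilityMeasure (ℙ : Measure Ω)]
    (Y Z : Ω → ℝ) (hYm : Measurable Y) (hZm : Measurable Z)
    (hIndep : IndepFun Y Z ℙ)
    (hY : Measure.map Y ℙ = volume.restrict (Ioo (0 : ℝ) 1))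
    (hZ : Measure.map Z ℙ = volume.restrict (Ioo (0 : ℝ) 1))
    (s : ℝ) (hs : s ∈ Ioo (0 : ℝ) 1) :
    ℙ {ω | min (s / Y ω) (Y ω / s) < Z ω}
      = ENNReal.ofReal (1 + s * Real.log s - s / 2) := by
  have hratio : Measurable fun y : ℝ ↦ min (s / y) (y / s) := by fun_prop
  have hY_pos : ∀ᵐ ω, 0 < Y ω := ae_of_ae_map hYm.aemeasurable <| hY ▸
    ae_restrict_of_forall_mem measurableSet_Ioo fun _ hy ↦ hy.1
  calc ℙ {ω | min (s / Y ω) (Y ω / s) < Z ω}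
      = ENNReal.ofReal (1 - ∫ ω, min (s / Y ω) (Y ω / s)) :=
        measure_lt_uniform_eq_one_sub_integral (hratio.comp hYm).aemeasurable hZm.aemeasurable
          (hIndep.comp hratio measurable_id) hZ
          (hY_pos.mono fun _ hω ↦ min_div_div_mem_Icc hω hs.1)
    _ = ENNReal.ofReal (1 + s * Real.log s - s / 2) := by
        rw [integral_min_div_div_of_map_eq_uniform hYm.aemeasurable hY hs.1 hs.2.le]
        ring_nf
end

section
/- Let ψ_PR(s) = 1/6 + (2/3)·s·ln(s) for s ∈ (0,1). Then ∫_0^1 ψ_PR(s)^2 ds = 5/972; in particular this integral is strictly positive. -/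
open MeasureTheory Set

/-!
The substitution `x = exp (-t)` turns the moments `∫ x in (0, 1), x ^ r * (log x) ^ n` into Gamma
integrals, so they equal `(-1) ^ n * n! / (r + 1) ^ (n + 1)`. Expanding the square leaves the cases
`r = n = 0, 1, 2`, with values `1`, `-1 / 4` and `2 / 27`.
-/

section LogMoments

open Real
open scoped Nat

theorem integral_Ioo_zero_exp {E : Type*} [NormedAddCommGroup E] [NormedSpace ℝ E] (f : ℝ → E)
    (b : ℝ) : ∫ x in Ioo 0 (exp b), f x = ∫ t in Iio b, exp t • f (exp t) := by
  rw [← image_exp_Iio]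
  exact integral_image_eq_integral_deriv_smul_of_monotoneOn measurableSet_Iio
    (fun t _ => (hasDerivAt_exp t).hasDerivWithinAt) (exp_monotone.monotoneOn _) f

theorem integral_Ioo_zero_one_eq_integral_exp_neg {E : Type*} [NormedAddCommGroup E]
    [NormedSpace ℝ E] (f : ℝ → E) :
    ∫ x in Ioo 0 1, f x = ∫ t in Ioi 0, exp (-t) • f (exp (-t)) := by
  rw [integral_comp_neg_Ioi 0 fun t => exp t • f (exp t), neg_zero, integral_Iic_eq_integral_Iio,
    ← integral_Ioo_zero_exp, exp_zero]

theorem integral_rpow_mul_neg_log_rpow {a r : ℝ} (ha : 0 < a) (hr : 0 < r) :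
    ∫ x in Ioo 0 1, x ^ (r - 1) * (-log x) ^ (a - 1) = (1 / r) ^ a * Gamma a := by
  rw [integral_Ioo_zero_one_eq_integral_exp_neg, ← integral_rpow_mul_exp_neg_mul_Ioi ha hr]
  congr 1 with t
  have exp_neg_mul_rpow : exp (-t) * exp (-t) ^ (r - 1) = exp (-(r * t)) := by
    rw [← exp_mul, ← exp_add]
    ring_nf
  rw [log_exp, neg_neg, smul_eq_mul, ← mul_assoc, exp_neg_mul_rpow, mul_comm]

theorem integral_rpow_mul_log_pow {r : ℝ} (hr : -1 < r) (n : ℕ) :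
    ∫ x in Ioo 0 1, x ^ r * log x ^ n = (-1) ^ n * n ! / (r + 1) ^ (n + 1) := by
  calc ∫ x in Ioo 0 1, x ^ r * log x ^ n
    _ = ∫ x in Ioo 0 1, (-1) ^ n * (x ^ (r + 1 - 1) * (-log x) ^ ((n + 1 : ℝ) - 1)) := by
      congr 1 with x
      rw [add_sub_cancel_right, add_sub_cancel_right, rpow_natCast, mul_left_comm, ← mul_pow,
        neg_one_mul, neg_neg]
    _ = (-1) ^ n * ((1 / (r + 1)) ^ (n + 1 : ℝ) * Gamma (n + 1)) := by
      rw [integral_const_mul, integral_rpow_mul_neg_log_rpow n.cast_add_one_pos (by linarith)]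
    _ = (-1) ^ n * n ! / (r + 1) ^ (n + 1) := by
      rw [Gamma_nat_eq_factorial, ← Nat.cast_add_one, rpow_natCast, one_div, inv_pow]
      ring

theorem integral_mul_log_pow (n : ℕ) :
    ∫ x in Ioo 0 1, (x * log x) ^ n = (-1) ^ n * n ! / (n + 1) ^ (n + 1) := by
  simpa only [mul_pow, rpow_natCast] using
    integral_rpow_mul_log_pow (neg_one_lt_zero.trans_le n.cast_nonneg) n

theorem integral_add_mul_mul_log_pow (a b : ℝ) (k : ℕ) :
    ∫ x in Ioo 0 1, (a + b * (x * log x)) ^ k =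
      ∑ n ∈ Finset.range (k + 1),
        k.choose n * a ^ (k - n) * b ^ n * ((-1) ^ n * n ! / (n + 1) ^ (n + 1)) := by
  have integrableOn_mul_log_pow (n : ℕ) : IntegrableOn (fun x => (x * log x) ^ n) (Ioo 0 1) :=
    (continuous_mul_log.pow n).integrableOn_Icc.mono_set Ioo_subset_Icc_self
  calc ∫ x in Ioo 0 1, (a + b * (x * log x)) ^ k
    _ = ∫ x in Ioo 0 1, ∑ n ∈ Finset.range (k + 1),
          k.choose n * a ^ (k - n) * b ^ n * (x * log x) ^ n := by
      congr 1 with x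
      rw [add_comm a, add_pow]
      exact Finset.sum_congr rfl fun n _ => by ring
    _ = ∑ n ∈ Finset.range (k + 1), ∫ x in Ioo 0 1,
          k.choose n * a ^ (k - n) * b ^ n * (x * log x) ^ n :=
      integral_finsetSum _ fun n _ => (integrableOn_mul_log_pow n).const_mul _
    _ = _ := by simp only [integral_const_mul, integral_mul_log_pow]

end LogMoments

/-- The variance of the projection `ψ_PR(s) = 1/6 + (2/3)·s·ln s` of the Puri–Rubin
kernel: `∫₀¹ ψ_PR(s)² ds = 5/972`; in particular this integral is strictly positive,
so the kernel is non-degenerate. -/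
theorem integral_sq_projection_PsiPR :
    (∫ s in Ioo (0 : ℝ) 1, (1 / 6 + (2 / 3) * s * Real.log s) ^ 2) = 5 / 972 ∧
    0 < ∫ s in Ioo (0 : ℝ) 1, (1 / 6 + (2 / 3) * s * Real.log s) ^ 2 := by
  have integral_eq :
      ∫ s in Ioo (0 : ℝ) 1, (1 / 6 + (2 / 3) * s * Real.log s) ^ 2 = 5 / 972 := by
    calc ∫ s in Ioo (0 : ℝ) 1, (1 / 6 + (2 / 3) * s * Real.log s) ^ 2
      _ = (1 / 6) ^ 2 + 2 * (1 / 6) * (2 / 3) * (-1 / 4) + (2 / 3) ^ 2 * (2 / 27) := by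
        simp only [mul_assoc, integral_add_mul_mul_log_pow]
        norm_num [Finset.sum_range_succ]
      _ = 5 / 972 := by norm_num
  exact ⟨integral_eq, by rw [integral_eq]; norm_num⟩
end

section
/- Let h be a bounded measurable function on (0,1) with ∫_0^1 h(x) dx = 0, and for small θ ≥ 0 let g(x,θ) = 1 + θ·h(x) (a probability density on (0,1) for θ small enough). Let K(θ) = inf_{λ>0} ∫_0^1 ln( g(x,θ)/(λ x^{λ−1}) ) g(x,θ) dx be the Kullback–Leibler distance from g(·,θ) to the power function family. Then 2K(θ) ~ θ² [ ∫_0^1 h(x)² dx − ( ∫_0^1 h(x) ln(x) dx )² ] as θ → 0+, i.e. 2K(θ)/θ² converges to ∫_0^1 h² − (∫_0^1 h(x) ln x dx)². -/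
open MeasureTheory Set Filter Topology

/-!
Write `g = 1 + θ h`, `T x = log x` and `s = -∫ g T`.  For `λ > 0` the divergence of `g` from
`λ x ^ (λ - 1)` is `∫ g log g - log λ + (λ - 1) s`, which is smallest at `λ = 1 / s`, so
`K(θ) = ∫ g log g + log s + 1 - s`.  Since `∫ h = 0` and `∫ T = -1`, we have `s = 1 - θ a` with
`a = ∫ h T`, and the expansions `(1 + u) log (1 + u) = u + u² / 2 + O(u³)` at `u = θ h` and
`log (1 + u) = u - u² / 2 + O(u³)` at `u = -θ a` give `2 K(θ) = θ² (∫ h² - a²) + O(θ³)`.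
-/

open Asymptotics
open scoped ENNReal

section Expansions

theorem isBigO_sum_add_log_one_sub (n : ℕ) :
    (fun x : ℝ ↦ ∑ i ∈ Finset.range n, x ^ (i + 1) / (i + 1) + Real.log (1 - x))
      =O[𝓝 0] fun x ↦ x ^ (n + 1) := by
  refine IsBigO.of_bound 2 ?_
  filter_upwards [Metric.closedBall_mem_nhds (0 : ℝ) one_half_pos] with x hx
  have hx : |x| ≤ 1 / 2 := by simpa using hx
  rw [Real.norm_eq_abs, norm_pow, Real.norm_eq_abs]
  calc |∑ i ∈ Finset.range n, x ^ (i + 1) / (i + 1) + Real.log (1 - x)|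
      ≤ |x| ^ (n + 1) / (1 - |x|) := Real.abs_log_sub_add_sum_range_le (by linarith) n
    _ ≤ |x| ^ (n + 1) / (1 / 2) := by gcongr; linarith
    _ = 2 * |x| ^ (n + 1) := by ring

theorem isBigO_log_one_sub_mul_add (a : ℝ) :
    (fun θ : ℝ ↦ Real.log (1 - θ * a) + (θ * a + (θ * a) ^ 2 / 2)) =O[𝓝 0] fun θ ↦ θ ^ 3 := by
  have hlim : Tendsto (fun θ : ℝ ↦ θ * a) (𝓝 0) (𝓝 0) :=
    (continuous_mul_const a).tendsto' 0 0 (zero_mul a)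
  have hcube : (fun θ : ℝ ↦ (θ * a) ^ 3) =O[𝓝 0] fun θ ↦ θ ^ 3 :=
    ((isBigO_refl _ _).const_mul_left (a ^ 3)).congr_left fun θ ↦ by ring
  refine (((isBigO_sum_add_log_one_sub 2).comp_tendsto hlim).trans hcube).congr_left fun θ ↦ ?_
  simp only [Function.comp_apply, Finset.sum_range_succ, Finset.sum_range_zero]
  push_cast
  ring

theorem isBigO_log_one_add_sub :
    (fun u : ℝ ↦ Real.log (1 + u) - (u - u ^ 2 / 2)) =O[𝓝 0] fun u ↦ u ^ 3 :=
  (isBigO_log_one_sub_mul_add (-1)).congr_left fun u ↦ by ring_nf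

theorem isBigO_one_add_mul_log_one_add_sub :
    (fun u : ℝ ↦ (1 + u) * Real.log (1 + u) - (u + u ^ 2 / 2)) =O[𝓝 0] fun u ↦ u ^ 3 := by
  have hbdd : (fun u : ℝ ↦ 1 + u) =O[𝓝 0] fun _ ↦ (1 : ℝ) :=
    (continuous_const.add continuous_id).continuousAt.isBigO_one ℝ
  have hcube : (fun u : ℝ ↦ u ^ 3 / 2) =O[𝓝 0] fun u ↦ u ^ 3 :=
    ((isBigO_refl _ _).const_mul_left 2⁻¹).congr_left fun u ↦ by ring
  have hprod : (fun u : ℝ ↦ (1 + u) * (Real.log (1 + u) - (u - u ^ 2 / 2))) =O[𝓝 0]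
      fun u ↦ u ^ 3 := by
    simpa only [one_mul] using hbdd.mul isBigO_log_one_add_sub
  exact (hprod.sub hcube).congr_left fun u ↦ by ring

theorem tendsto_div_pow_of_isBigO_sub {𝕜 : Type*} [NormedField 𝕜] {f : 𝕜 → 𝕜} {c : 𝕜} {n : ℕ}
    (hf : (fun x ↦ f x - x ^ n * c) =O[𝓝 0] fun x ↦ x ^ (n + 1)) :
    Tendsto (fun x ↦ f x / x ^ n) (𝓝[≠] 0) (𝓝 c) := by
  have hquot : Tendsto (fun x ↦ (f x - x ^ n * c) / x ^ n) (𝓝[≠] 0) (𝓝 0) :=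
    (hf.trans_isLittleO (isLittleO_pow_pow n.lt_succ_self)).tendsto_div_nhds_zero.mono_left
      nhdsWithin_le_nhds
  rw [← zero_add c]
  refine (hquot.add_const c).congr' ?_
  filter_upwards [self_mem_nhdsWithin] with x (hx : x ≠ 0)
  field_simp
  ring

end Expansions

section BoundedFunctions

variable {α : Type*} [MeasurableSpace α] {μ : Measure α}

theorem memLp_top_comp {E F : Type*} [NormedAddCommGroup E] [ProperSpace E] [NormedAddCommGroup F]
    {φ : E → F} {f : α → E} (hφ : Continuous φ) (hf : MemLp f ∞ μ) :
    MemLp (fun x ↦ φ (f x)) ∞ μ := by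
  obtain ⟨B, hB⟩ := (isCompact_closedBall (0 : E) (lpNorm f ∞ μ)).exists_bound_of_continuousOn
    hφ.continuousOn
  refine memLp_top_of_bound (hφ.comp_aestronglyMeasurable hf.aestronglyMeasurable) B ?_
  filter_upwards [ae_le_lpNorm_exponent_top hf] with x hx
  exact hB _ (mem_closedBall_zero_iff.mpr hx)

theorem eventually_ae_norm_smul_lt {𝕜 E : Type*} [NormedField 𝕜] [NormedAddCommGroup E]
    [NormedSpace 𝕜 E] {h : α → E} (hh : MemLp h ∞ μ) {δ : ℝ} (hδ : 0 < δ) :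
    ∀ᶠ θ : 𝕜 in 𝓝 0, ∀ᵐ x ∂μ, ‖θ • h x‖ < δ := by
  have hlim : Tendsto (fun θ : 𝕜 ↦ ‖θ‖ * lpNorm h ∞ μ) (𝓝 0) (𝓝 0) := by
    simpa using (tendsto_norm_zero (E := 𝕜)).mul_const (lpNorm h ∞ μ)
  filter_upwards [hlim.eventually_lt_const hδ] with θ hθ
  filter_upwards [ae_le_lpNorm_exponent_top hh] with x hx
  calc ‖θ • h x‖ = ‖θ‖ * ‖h x‖ := norm_smul θ (h x)
    _ ≤ ‖θ‖ * lpNorm h ∞ μ := by gcongr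
    _ < δ := hθ

variable [IsFiniteMeasure μ]

theorem isBigO_integral_comp_smul {𝕜 E F : Type*} [NormedField 𝕜] [NormedAddCommGroup E]
    [NormedSpace 𝕜 E] [NormedAddCommGroup F] [NormedSpace ℝ F] {φ : E → F} {h : α → E} {n : ℕ}
    (hφ : φ =O[𝓝 0] fun u ↦ ‖u‖ ^ n) (hh : MemLp h ∞ μ) :
    (fun θ : 𝕜 ↦ ∫ x, φ (θ • h x) ∂μ) =O[𝓝 0] fun θ ↦ θ ^ n := by
  obtain ⟨c, hc, hφc⟩ := hφ.exists_pos
  obtain ⟨δ, hδ, hball⟩ := Metric.eventually_nhds_iff.mp hφc.bound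
  refine IsBigO.of_bound (c * lpNorm h ∞ μ ^ n * μ.real univ) ?_
  filter_upwards [eventually_ae_norm_smul_lt hh hδ] with θ hθ
  have hpoint : ∀ᵐ x ∂μ, ‖φ (θ • h x)‖ ≤ c * lpNorm h ∞ μ ^ n * ‖θ ^ n‖ := by
    filter_upwards [hθ, ae_le_lpNorm_exponent_top hh] with x hsmall hx
    calc ‖φ (θ • h x)‖ ≤ c * ‖‖θ • h x‖ ^ n‖ := hball (by rwa [dist_zero_right])
      _ = c * ‖h x‖ ^ n * ‖θ ^ n‖ := by
        rw [norm_pow, norm_norm, norm_smul, mul_pow, norm_pow]; ring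
      _ ≤ c * lpNorm h ∞ μ ^ n * ‖θ ^ n‖ := by gcongr
  exact (norm_integral_le_of_norm_le_const hpoint).trans_eq (by ring)

theorem isBigO_integral_one_add_mul_log_one_add_sub {h : α → ℝ} (hh : MemLp h ∞ μ) :
    (fun θ : ℝ ↦ ∫ x, (1 + θ * h x) * Real.log (1 + θ * h x) ∂μ
        - (θ * ∫ x, h x ∂μ + θ ^ 2 / 2 * ∫ x, h x ^ 2 ∂μ)) =O[𝓝 0] fun θ ↦ θ ^ 3 := by
  have hrem : (fun u : ℝ ↦ (1 + u) * Real.log (1 + u) - (u + u ^ 2 / 2)) =O[𝓝 0]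
      fun u ↦ ‖u‖ ^ 3 :=
    isBigO_one_add_mul_log_one_add_sub.trans (IsBigO.of_norm_le fun u ↦ (norm_pow u 3).le)
  refine (isBigO_integral_comp_smul (𝕜 := ℝ) hrem hh).congr_left fun θ ↦ ?_
  have hlin : Integrable (fun x ↦ θ * h x) μ := (hh.integrable le_top).const_mul θ
  have hsq : Integrable (fun x ↦ θ ^ 2 / 2 * h x ^ 2) μ :=
    ((memLp_top_comp (continuous_pow 2) hh).integrable le_top).const_mul _
  have hent : Integrable (fun x ↦ (1 + θ * h x) * Real.log (1 + θ * h x)) μ :=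
    (memLp_top_comp (φ := fun u ↦ (1 + θ * u) * Real.log (1 + θ * u))
      (Real.continuous_mul_log.comp (by fun_prop)) hh).integrable le_top
  calc ∫ x, ((1 + θ • h x) * Real.log (1 + θ • h x) - (θ • h x + (θ • h x) ^ 2 / 2)) ∂μ
      = ∫ x, ((1 + θ * h x) * Real.log (1 + θ * h x) - (θ * h x + θ ^ 2 / 2 * h x ^ 2)) ∂μ := by
        congr with x; simp only [smul_eq_mul]; ring
    _ = ∫ x, (1 + θ * h x) * Real.log (1 + θ * h x) ∂μ
          - (θ * ∫ x, h x ∂μ + θ ^ 2 / 2 * ∫ x, h x ^ 2 ∂μ) := by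
        rw [integral_sub hent (hlin.fun_add hsq), integral_add hlin hsq, integral_const_mul,
          integral_const_mul]

end BoundedFunctions

section PowerFamily

/-- The Kullback–Leibler distance `inf_{λ > 0} ∫₀¹ log (g x / (λ x ^ (λ - 1))) g x dx` from a
density `g` on `(0, 1)` to the family of power densities `λ x ^ (λ - 1)`. It is meaningful when
the integrals converge and are bounded below; otherwise the conventions for `∫` and `sInf`
apply. -/
noncomputable def powerFamilyDistance (g : ℝ → ℝ) : ℝ :=
  sInf ((fun l : ℝ ↦ ∫ x in Ioo (0 : ℝ) 1, Real.log (g x / (l * x ^ (l - 1))) * g x) '' Ioi 0)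

theorem integrableOn_log_Ioo_zero_one : IntegrableOn Real.log (Ioo 0 1) :=
  (intervalIntegrable_iff_integrableOn_Ioo_of_le zero_le_one).mp
    intervalIntegral.intervalIntegrable_log'

theorem integral_log_Ioo_zero_one : ∫ x in Ioo (0 : ℝ) 1, Real.log x = -1 := by
  rw [← integral_Ioc_eq_integral_Ioo, ← intervalIntegral.integral_of_le zero_le_one, integral_log]
  simp

theorem isLeast_image_sub_log_add_mul (c : ℝ) {s : ℝ} (hs : 0 < s) :
    IsLeast ((fun l : ℝ ↦ c - Real.log l + (l - 1) * s) '' Ioi 0) (c + Real.log s + 1 - s) := by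
  refine ⟨⟨s⁻¹, inv_pos.mpr hs, ?_⟩, ?_⟩
  · simp only [Real.log_inv]
    field_simp
    ring
  · rintro _ ⟨l, hl : 0 < l, rfl⟩
    have hlog : Real.log l + Real.log s ≤ l * s - 1 :=
      Real.log_mul hl.ne' hs.ne' ▸ Real.log_le_sub_one_of_pos (mul_pos hl hs)
    linarith

variable {g : ℝ → ℝ}

theorem integrableOn_mul_log_of_memLp_top (hg : MemLp g ∞ (volume.restrict (Ioo 0 1))) :
    IntegrableOn (fun x ↦ g x * Real.log x) (Ioo 0 1) :=
  Integrable.mul_of_top_right integrableOn_log_Ioo_zero_one hg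

theorem neg_integral_mul_log_pos (hg : ∀ᵐ x ∂volume.restrict (Ioo 0 1), 0 ≤ g x)
    (hmass : (∫ x in Ioo (0 : ℝ) 1, g x) ≠ 0)
    (hlog : IntegrableOn (fun x ↦ g x * Real.log x) (Ioo 0 1)) :
    0 < -∫ x in Ioo (0 : ℝ) 1, g x * Real.log x := by
  have hnonneg : ∀ᵐ x ∂volume.restrict (Ioo 0 1), 0 ≤ -(g x * Real.log x) := by
    filter_upwards [hg, ae_restrict_mem measurableSet_Ioo] with x hgx hx
    exact neg_nonneg.mpr (mul_nonpos_of_nonneg_of_nonpos hgx (Real.log_neg hx.1 hx.2).le)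
  rw [← integral_neg]
  refine (integral_nonneg_of_ae hnonneg).lt_of_ne fun hint ↦ hmass ?_
  have hvanish := (integral_eq_zero_iff_of_nonneg_ae hnonneg hlog.neg).mp hint.symm
  refine integral_eq_zero_of_ae ?_
  filter_upwards [hvanish, ae_restrict_mem measurableSet_Ioo] with x hgx hx
  exact (mul_eq_zero.mp (neg_eq_zero.mp hgx)).resolve_right (Real.log_neg hx.1 hx.2).ne

theorem integral_log_div_power_mul {l : ℝ} (hl : 0 < l) (hg : IntegrableOn g (Ioo 0 1))
    (hent : IntegrableOn (fun x ↦ g x * Real.log (g x)) (Ioo 0 1))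
    (hlog : IntegrableOn (fun x ↦ g x * Real.log x) (Ioo 0 1)) :
    ∫ x in Ioo (0 : ℝ) 1, Real.log (g x / (l * x ^ (l - 1))) * g x
      = (∫ x in Ioo (0 : ℝ) 1, g x * Real.log (g x))
        - Real.log l * (∫ x in Ioo (0 : ℝ) 1, g x)
        - (l - 1) * ∫ x in Ioo (0 : ℝ) 1, g x * Real.log x := by
  have hpoint : ∀ x ∈ Ioo (0 : ℝ) 1, Real.log (g x / (l * x ^ (l - 1))) * g x
      = g x * Real.log (g x) - Real.log l * g x - (l - 1) * (g x * Real.log x) := by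
    intro x hx
    rcases eq_or_ne (g x) 0 with hgx | hgx
    · simp [hgx]
    · have hpow : 0 < x ^ (l - 1) := Real.rpow_pos_of_pos hx.1 _
      rw [Real.log_div hgx (mul_pos hl hpow).ne', Real.log_mul hl.ne' hpow.ne',
        Real.log_rpow hx.1]
      ring
  have hentropy : IntegrableOn (fun x ↦ g x * Real.log (g x) - Real.log l * g x) (Ioo 0 1) :=
    hent.sub (hg.const_mul _)
  rw [setIntegral_congr_fun measurableSet_Ioo hpoint,
    integral_sub hentropy (hlog.const_mul _),
    integral_sub hent (hg.const_mul _), integral_const_mul, integral_const_mul]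

theorem powerFamilyDistance_eq (hg : ∀ᵐ x ∂volume.restrict (Ioo 0 1), 0 ≤ g x)
    (hmass : ∫ x in Ioo (0 : ℝ) 1, g x = 1)
    (hent : IntegrableOn (fun x ↦ g x * Real.log (g x)) (Ioo 0 1))
    (hlog : IntegrableOn (fun x ↦ g x * Real.log x) (Ioo 0 1)) :
    powerFamilyDistance g = (∫ x in Ioo (0 : ℝ) 1, g x * Real.log (g x))
      + Real.log (-∫ x in Ioo (0 : ℝ) 1, g x * Real.log x) + 1
      + ∫ x in Ioo (0 : ℝ) 1, g x * Real.log x := by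
  have hs : 0 < -∫ x in Ioo (0 : ℝ) 1, g x * Real.log x :=
    neg_integral_mul_log_pos hg (by simp [hmass]) hlog
  rw [powerFamilyDistance, ← sub_neg_eq_add, ← (isLeast_image_sub_log_add_mul _ hs).csInf_eq]
  congr 1
  refine image_congr fun l hl ↦ ?_
  rw [integral_log_div_power_mul hl (integrable_of_integral_eq_one hmass) hent hlog, hmass]
  ring

theorem powerFamilyDistance_one_add_mul {h : ℝ → ℝ} {θ : ℝ}
    (hh : MemLp h ∞ (volume.restrict (Ioo 0 1))) (hzero : ∫ x in Ioo (0 : ℝ) 1, h x = 0)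
    (hg : ∀ᵐ x ∂volume.restrict (Ioo 0 1), 0 ≤ 1 + θ * h x) :
    powerFamilyDistance (fun x ↦ 1 + θ * h x)
      = (∫ x in Ioo (0 : ℝ) 1, (1 + θ * h x) * Real.log (1 + θ * h x))
        + Real.log (1 - θ * ∫ x in Ioo (0 : ℝ) 1, h x * Real.log x)
        + θ * ∫ x in Ioo (0 : ℝ) 1, h x * Real.log x := by
  have hgLp : MemLp (fun x ↦ 1 + θ * h x) ∞ (volume.restrict (Ioo 0 1)) :=
    memLp_top_comp (φ := fun u ↦ 1 + θ * u) (by fun_prop) hh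
  have hmass : ∫ x in Ioo (0 : ℝ) 1, (1 + θ * h x) = 1 := by
    rw [integral_add (integrable_const 1) ((hh.integrable le_top).const_mul θ),
      integral_const_mul, hzero]
    simp
  have hhlog : IntegrableOn (fun x ↦ θ * (h x * Real.log x)) (Ioo 0 1) :=
    (integrableOn_mul_log_of_memLp_top hh).const_mul θ
  have hmoment : ∫ x in Ioo (0 : ℝ) 1, (1 + θ * h x) * Real.log x
      = -1 + θ * ∫ x in Ioo (0 : ℝ) 1, h x * Real.log x := by
    simp only [add_mul, one_mul, mul_assoc]
    rw [integral_add integrableOn_log_Ioo_zero_one hhlog, integral_log_Ioo_zero_one,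
      integral_const_mul]
  rw [powerFamilyDistance_eq hg hmass
    ((memLp_top_comp Real.continuous_mul_log hgLp).integrable le_top)
    (integrableOn_mul_log_of_memLp_top hgLp), hmoment, neg_add, neg_neg, ← sub_eq_add_neg]
  ring

theorem kullback_leibler_local_expansion_general {h : ℝ → ℝ}
    (hh : MemLp h ∞ (volume.restrict (Ioo 0 1))) (hzero : ∫ x in Ioo (0 : ℝ) 1, h x = 0) :
    (fun θ : ℝ ↦ 2 * powerFamilyDistance (fun x ↦ 1 + θ * h x)
        - θ ^ 2 * ((∫ x in Ioo (0 : ℝ) 1, h x ^ 2)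
          - (∫ x in Ioo (0 : ℝ) 1, h x * Real.log x) ^ 2))
      =O[𝓝 0] fun θ ↦ θ ^ 3 := by
  have hentropy := isBigO_integral_one_add_mul_log_one_add_sub hh
  have hlog := isBigO_log_one_sub_mul_add (∫ x in Ioo (0 : ℝ) 1, h x * Real.log x)
  refine ((hentropy.add hlog).const_mul_left 2).congr' ?_ EventuallyEq.rfl
  filter_upwards [eventually_ae_norm_smul_lt (𝕜 := ℝ) hh one_pos] with θ hθ
  have hg : ∀ᵐ x ∂volume.restrict (Ioo 0 1), 0 ≤ 1 + θ * h x := by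
    filter_upwards [hθ] with x hx
    linarith [(abs_lt.mp hx).1, smul_eq_mul θ (h x)]
  rw [powerFamilyDistance_one_add_mul hh hzero hg, hzero]
  ring

end PowerFamily

/-- **Local expansion of the Kullback–Leibler distance to the power function family.**
Let `h` be bounded measurable on `(0,1)` with `∫₀¹ h = 0` and, for small `θ ≥ 0`,
let `g(x,θ) = 1 + θ·h(x)` (a probability density on `(0,1)` for `θ` small).  With
`K(θ) = inf_{λ>0} ∫₀¹ ln(g(x,θ)/(λ x^{λ−1})) g(x,θ) dx` the Kullback–Leibler distance
to the power family, one has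
`2K(θ)/θ² → ∫₀¹ h² − (∫₀¹ h(x) ln x dx)²` as `θ → 0+`. -/
theorem kullback_leibler_local_expansion
    (h : ℝ → ℝ) (hmeas : Measurable h)
    (hbdd : ∃ C : ℝ, ∀ x ∈ Ioo (0 : ℝ) 1, |h x| ≤ C)
    (hzero : ∫ x in Ioo (0 : ℝ) 1, h x = 0) :
    Tendsto
      (fun θ : ℝ =>
        2 * sInf ((fun l : ℝ =>
            ∫ x in Ioo (0 : ℝ) 1,
              Real.log ((1 + θ * h x) / (l * x ^ (l - 1))) * (1 + θ * h x)) '' Ioi 0)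
          / θ ^ 2)
      (𝓝[>] 0)
      (𝓝 ((∫ x in Ioo (0 : ℝ) 1, h x ^ 2)
            - (∫ x in Ioo (0 : ℝ) 1, h x * Real.log x) ^ 2)) := by
  obtain ⟨C, hC⟩ := hbdd
  have hh : MemLp h ∞ (volume.restrict (Ioo 0 1)) :=
    memLp_top_of_bound hmeas.aestronglyMeasurable C (ae_restrict_of_forall_mem measurableSet_Ioo hC)
  exact (tendsto_div_pow_of_isBigO_sub
    (kullback_leibler_local_expansion_general hh hzero)).mono_left (nhdsGT_le_nhdsNE 0)
end

section
/- Let X and Y be i.i.d. uniform random variables on (0,1), and for t ∈ (0,1) define the kernel Ξ_PR(X,Y;t) = 1{min(X/Y, Y/X) < t} − (1/2)·1{X < t} − (1/2)·1{Y < t}. Then for every s, t ∈ (0,1), E[ Ξ_PR(X,Y;t) | X = s ] = 1{s < t}·(1/2 − s/t) + s·t − t/2. -/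
/-!
For `s, y > 0`, the event `min (s / y) (y / s) < t` says that `y < s * t` or `s / t < y`. These two
rays are disjoint as soon as `t ≤ 1`, so for `Y` of any law on `(0, ∞)` the projection is a
combination of probabilities of rays, which are then evaluated at the uniform law.
-/

open MeasureTheory Set

/-- The kernel `Ξ_PR(x, y; t)` of the Kolmogorov-type statistic based on the Puri–Rubin
characterization, centered under the uniform law on `(0, 1)`. -/
noncomputable def puriRubinKernel (x y t : ℝ) : ℝ :=
  (if min (x / y) (y / x) < t then (1 : ℝ) else 0)
    - (1 / 2) * (if x < t then (1 : ℝ) else 0)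
    - (1 / 2) * (if y < t then (1 : ℝ) else 0)

section OrderedField

variable {K : Type*} [Field K] [LinearOrder K] [IsStrictOrderedRing K] {s t y : K}

lemma min_div_div_lt_iff (hs : 0 < s) (hy : 0 < y) (ht : 0 < t) :
    min (s / y) (y / s) < t ↔ y < s * t ∨ s / t < y := by
  rw [min_lt_iff, div_lt_comm₀ hy ht, div_lt_iff₀' hs, or_comm]

lemma mul_le_div_of_le_one (hs : 0 ≤ s) (ht : 0 < t) (ht1 : t ≤ 1) : s * t ≤ s / t :=
  (mul_le_of_le_one_right hs ht1).trans (le_div_self hs ht ht1)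

lemma ite_lt_mul_one_sub_div (ht : 0 < t) :
    (if s < t then (1 : K) else 0) * (1 - s / t) = max (1 - s / t) 0 := by
  split_ifs with hst
  · rw [one_mul, max_eq_left (sub_nonneg.2 ((div_le_one ht).2 hst.le))]
  · rw [zero_mul, max_eq_right (sub_nonpos.2 ((one_le_div ht).2 (not_lt.1 hst)))]

end OrderedField

section IndicatorIntegral

variable {α : Type*} {p : α → Prop} [DecidablePred p]

lemma ite_one_zero_eq_indicator :
    (fun a => if p a then (1 : ℝ) else 0) = indicator {a | p a} 1 := by
  ext a
  simp only [indicator, mem_ofPred_eq, Pi.one_apply]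

variable [MeasurableSpace α] {ν : Measure α}

lemma integrable_ite_one_zero [IsFiniteMeasure ν] (hp : MeasurableSet {a | p a}) :
    Integrable (fun a => if p a then (1 : ℝ) else 0) ν := by
  rw [ite_one_zero_eq_indicator]
  exact (integrable_const 1).indicator hp

lemma integral_ite_one_zero (hp : MeasurableSet {a | p a}) :
    ∫ a, (if p a then (1 : ℝ) else 0) ∂ν = ν.real {a | p a} := by
  rw [ite_one_zero_eq_indicator, integral_indicator_one hp]

end IndicatorIntegral

section GeneralLaw

variable {μ : Measure ℝ} {s t : ℝ}

lemma measureReal_min_div_div_lt [IsFiniteMeasure μ] (hμ : ∀ᵐ y ∂μ, 0 < y) (hs : 0 < s)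
    (ht : 0 < t) (ht1 : t ≤ 1) :
    μ.real {y | min (s / y) (y / s) < t} = μ.real (Iio (s * t)) + μ.real (Ioi (s / t)) := by
  have rays : {y | min (s / y) (y / s) < t} =ᵐ[μ] (Iio (s * t) ∪ Ioi (s / t) : Set ℝ) := by
    filter_upwards [hμ] with y hy using propext (min_div_div_lt_iff hs hy ht)
  have disjoint_rays : Disjoint (Iio (s * t)) (Ioi (s / t)) :=
    (Ioi_disjoint_Iio_of_le (mul_le_div_of_le_one hs.le ht ht1)).symm
  rw [measureReal_congr rays, measureReal_union disjoint_rays measurableSet_Ioi]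

lemma integral_puriRubinKernel [IsProbabilityMeasure μ] :
    ∫ y, puriRubinKernel s y t ∂μ =
      μ.real {y | min (s / y) (y / s) < t} - (1 / 2) * (if s < t then (1 : ℝ) else 0)
        - (1 / 2) * μ.real (Iio t) := by
  have ratio_meas : MeasurableSet {y : ℝ | min (s / y) (y / s) < t} := by measurability
  have ratio_int := integrable_ite_one_zero (ν := μ) ratio_meas
  have ray_int := integrable_ite_one_zero (ν := μ) (p := (· < t)) measurableSet_Iio
  unfold puriRubinKernel
  rw [integral_sub (by exact ratio_int.sub (integrable_const _)) (ray_int.const_mul _),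
    integral_sub ratio_int (integrable_const _), integral_const, integral_const_mul,
    probReal_univ, one_smul, integral_ite_one_zero ratio_meas,
    integral_ite_one_zero measurableSet_Iio]
  rfl

theorem projection_XiPR_general [IsProbabilityMeasure μ] (hμ : ∀ᵐ y ∂μ, 0 < y) (hs : 0 < s)
    (ht : 0 < t) (ht1 : t ≤ 1) :
    ∫ y, puriRubinKernel s y t ∂μ =
      μ.real (Iio (s * t)) + μ.real (Ioi (s / t)) - (1 / 2) * (if s < t then (1 : ℝ) else 0)
        - (1 / 2) * μ.real (Iio t) := by
  rw [integral_puriRubinKernel, measureReal_min_div_div_lt hμ hs ht ht1]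

end GeneralLaw

section UniformLaw

variable {a : ℝ}

lemma isProbabilityMeasure_restrict_Ioo_zero_one :
    IsProbabilityMeasure (volume.restrict (Ioo (0 : ℝ) 1)) :=
  ⟨by simp⟩

lemma measureReal_restrict_Ioo_zero_one_Iio (ha : a ∈ Icc (0 : ℝ) 1) :
    (volume.restrict (Ioo (0 : ℝ) 1)).real (Iio a) = a := by
  rw [measureReal_restrict_apply measurableSet_Iio, Iio_inter_Ioo, min_eq_left ha.2,
    Real.volume_real_Ioo_of_le ha.1, sub_zero]

lemma measureReal_restrict_Ioo_zero_one_Ioi (ha : 0 ≤ a) :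
    (volume.restrict (Ioo (0 : ℝ) 1)).real (Ioi a) = max (1 - a) 0 := by
  rw [measureReal_restrict_apply measurableSet_Ioi, Ioi_inter_Ioo, max_eq_left ha,
    Real.volume_real_Ioo]

end UniformLaw

/-- **Projection of the Kolmogorov-type kernel family.**  For `X, Y` i.i.d. uniform on
`(0,1)` and `t ∈ (0,1)`, the kernel
`Ξ_PR(X,Y;t) = 1{min(X/Y, Y/X) < t} − (1/2)1{X < t} − (1/2)1{Y < t}`
has conditional expectation given `X = s` (i.e. the integral over the uniform
variable `Y` at `X = s`) equal to `1{s < t}(1/2 − s/t) + s·t − t/2`,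
for every `s, t ∈ (0,1)`. -/
theorem projection_XiPR (s t : ℝ) (hs : s ∈ Ioo (0 : ℝ) 1) (ht : t ∈ Ioo (0 : ℝ) 1) :
    (∫ y in Ioo (0 : ℝ) 1,
        ((if min (s / y) (y / s) < t then (1 : ℝ) else 0)
          - (1 / 2) * (if s < t then (1 : ℝ) else 0)
          - (1 / 2) * (if y < t then (1 : ℝ) else 0)))
      = (if s < t then (1 : ℝ) else 0) * (1 / 2 - s / t) + s * t - t / 2 := by
  have := isProbabilityMeasure_restrict_Ioo_zero_one
  have pos : ∀ᵐ y ∂volume.restrict (Ioo (0 : ℝ) 1), 0 < y :=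
    ae_restrict_of_forall_mem measurableSet_Ioo fun _ hy => hy.1
  have mul_mem : s * t ∈ Icc (0 : ℝ) 1 :=
    ⟨mul_nonneg hs.1.le ht.1.le, mul_le_one₀ hs.2.le ht.1.le ht.2.le⟩
  change ∫ y in Ioo (0 : ℝ) 1, puriRubinKernel s y t = _
  rw [projection_XiPR_general pos hs.1 ht.1 ht.2.le,
    measureReal_restrict_Ioo_zero_one_Iio mul_mem,
    measureReal_restrict_Ioo_zero_one_Ioi (div_nonneg hs.1.le ht.1.le),
    measureReal_restrict_Ioo_zero_one_Iio (Ioo_subset_Icc_self ht),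
    ← ite_lt_mul_one_sub_div ht.1]
  ring
end

section
/- Let r > 1, h(x) = r x^{r−1} − 1, and ξ_PR(s;t) = 1{s < t}·(1/2 − s/t) + s·t − t/2. Then sup_{t∈(0,1)} | 2 ∫_0^1 ξ_PR(s;t) h(s) ds | = ( (r−1)² / (r+1) ) · r^{−r/(r−1)}. -/
open MeasureTheory Set

/-!
Let `T f t = 2 ∫₀¹ ξ(s; t) f(s) ds`. `T` acts on powers by
`T (s ^ p) t = p / ((p + 1) (p + 2)) · (t - t ^ (p + 1))`. Hence `T` kills constants, and it maps
`r s ^ (r - 1) - 1` to `(r - 1) / (r + 1) · (t - t ^ r)`, which is nonnegative on `(0, 1)`.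
The graph of `t ^ r` has slope `1` at `t₀ = r ^ (-1 / (r - 1))`, and comparing `t ^ r` with its
tangent there shows that `(r - 1) (t - t ^ r)` is largest at `t₀`, both for `r > 1` (where `t ^ r`
is convex) and for `0 < r < 1` (where it is concave and the factor `r - 1` is negative).
-/

/-- The projection `ξ_PR(s; t)` of the Puri–Rubin kernel family under the uniform distribution.
At `t = 0` the quotient `s / t` is a junk value; it is cancelled by the indicator when `0 ≤ s`. -/
noncomputable def puriRubinProjection (s t : ℝ) : ℝ :=
  (if s < t then (1 : ℝ) else 0) * (1 / 2 - s / t) + s * t - t / 2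

/-- The `θ`-derivative `h(x) = r x ^ (r - 1) - 1` of the contamination density
`1 + θ (r x ^ (r - 1) - 1)`. -/
noncomputable def contaminationScore (r x : ℝ) : ℝ :=
  r * x ^ (r - 1) - 1

/-- The point at which `x ^ r` has slope `1`, where the supremum is attained. -/
noncomputable def rpowUnitSlopePoint (r : ℝ) : ℝ :=
  r ^ (-(1 / (r - 1)))

section Projection

variable {f : ℝ → ℝ} {p r t : ℝ}

lemma puriRubinProjection_mul_eq_indicator_add (f : ℝ → ℝ) (s t : ℝ) :
    puriRubinProjection s t * f s =
      (Iio t).indicator (fun u => (1 / 2 - u / t) * f u) s + t * ((s - 1 / 2) * f s) := by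
  by_cases hs : s < t
  · simp only [puriRubinProjection, if_pos hs, indicator_of_mem (mem_Iio.2 hs)]
    ring
  · simp only [puriRubinProjection, if_neg hs, indicator_of_notMem (mt mem_Iio.1 hs)]
    ring

lemma integrableOn_Ioo_continuous_mul {g : ℝ → ℝ} {a b : ℝ} (hab : a ≤ b) (hg : Continuous g)
    (hf : IntervalIntegrable f volume a b) :
    IntegrableOn (fun s => g s * f s) (Ioo a b) :=
  (intervalIntegrable_iff_integrableOn_Ioo_of_le hab).1 (hf.continuousOn_mul hg.continuousOn)

lemma integrableOn_puriRubinProjection_mul (hf : IntervalIntegrable f volume 0 1) (t : ℝ) :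
    IntegrableOn (fun s => puriRubinProjection s t * f s) (Ioo 0 1) := by
  simp only [puriRubinProjection_mul_eq_indicator_add]
  exact
    ((integrableOn_Ioo_continuous_mul zero_le_one (by fun_prop) hf).indicator measurableSet_Iio).add
    ((integrableOn_Ioo_continuous_mul zero_le_one (by fun_prop) hf).const_mul t)

lemma integral_puriRubinProjection_mul (hf : IntervalIntegrable f volume 0 1)
    (ht : t ∈ Icc (0 : ℝ) 1) :
    ∫ s in Ioo (0 : ℝ) 1, puriRubinProjection s t * f s =
      (∫ s in (0 : ℝ)..t, (1 / 2 - s / t) * f s) +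
        t * ∫ s in (0 : ℝ)..1, (s - 1 / 2) * f s := by
  simp only [puriRubinProjection_mul_eq_indicator_add]
  rw [integral_add
      ((integrableOn_Ioo_continuous_mul zero_le_one (by fun_prop) hf).indicator measurableSet_Iio)
      ((integrableOn_Ioo_continuous_mul zero_le_one (by fun_prop) hf).const_mul t),
    setIntegral_indicator measurableSet_Iio, Ioo_inter_Iio, min_eq_right ht.2, integral_const_mul,
    intervalIntegral.integral_of_le ht.1, intervalIntegral.integral_of_le zero_le_one,
    integral_Ioc_eq_integral_Ioo, integral_Ioc_eq_integral_Ioo]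

lemma integral_affine_mul_rpow (hp : -1 < p) (c d : ℝ) {a : ℝ} (ha : 0 ≤ a) :
    ∫ s in (0 : ℝ)..a, (c + d * s) * s ^ p =
      c * (a ^ (p + 1) / (p + 1)) + d * (a ^ (p + 2) / (p + 2)) := by
  have expand : EqOn (fun s : ℝ => (c + d * s) * s ^ p)
      (fun s => c * s ^ p + d * s ^ (p + 1)) (uIcc 0 a) := by
    intro s hs
    rw [uIcc_of_le ha] at hs
    simp only [Real.rpow_add_one' hs.1 (by linarith : p + 1 ≠ 0)]
    ring
  have hp' : -1 < p + 1 := by linarith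
  rw [intervalIntegral.integral_congr expand, intervalIntegral.integral_add
      ((intervalIntegral.intervalIntegrable_rpow' hp).const_mul c)
      ((intervalIntegral.intervalIntegrable_rpow' hp').const_mul d),
    intervalIntegral.integral_const_mul, intervalIntegral.integral_const_mul,
    integral_rpow (.inl hp), integral_rpow (.inl hp'), show p + 1 + 1 = p + 2 by ring,
    Real.zero_rpow (by linarith), Real.zero_rpow (by linarith), sub_zero, sub_zero]

lemma two_mul_integral_puriRubinProjection_mul_rpow (hp : -1 < p) (ht : t ∈ Ioc (0 : ℝ) 1) :
    2 * ∫ s in Ioo (0 : ℝ) 1, puriRubinProjection s t * s ^ p =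
      p / ((p + 1) * (p + 2)) * (t - t ^ (p + 1)) := by
  have below : ∫ s in (0 : ℝ)..t, (1 / 2 - s / t) * s ^ p =
      1 / 2 * (t ^ (p + 1) / (p + 1)) + -1 / t * (t ^ (p + 2) / (p + 2)) := by
    rw [← integral_affine_mul_rpow hp _ _ ht.1.le]
    congr! 3
    ring
  have full : ∫ s in (0 : ℝ)..1, (s - 1 / 2) * s ^ p =
      -1 / 2 * (1 / (p + 1)) + 1 * (1 / (p + 2)) := by
    simpa [add_comm, sub_eq_add_neg, neg_div] using
      integral_affine_mul_rpow hp (-1 / 2) 1 zero_le_one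
  have ht0 : t ≠ 0 := ht.1.ne'
  have hp1 : p + 1 ≠ 0 := by linarith
  have hp2 : p + 2 ≠ 0 := by linarith
  have pow_succ : t ^ (p + 2) = t ^ (p + 1) * t := by
    rw [← Real.rpow_add_one ht0]
    ring_nf
  rw [integral_puriRubinProjection_mul (intervalIntegral.intervalIntegrable_rpow' hp)
    (Ioc_subset_Icc_self ht), below, full, pow_succ]
  field_simp
  ring

lemma two_mul_integral_puriRubinProjection_mul_contaminationScore (hr : 0 < r)
    (ht : t ∈ Ioc (0 : ℝ) 1) :
    2 * ∫ s in Ioo (0 : ℝ) 1, puriRubinProjection s t * contaminationScore r s =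
      (r + 1)⁻¹ * ((r - 1) * (t - t ^ r)) := by
  have hp : -1 < r - 1 := by linarith
  have power := two_mul_integral_puriRubinProjection_mul_rpow hp ht
  have const := two_mul_integral_puriRubinProjection_mul_rpow neg_one_lt_zero ht
  have integrable {q : ℝ} (hq : -1 < q) := integrableOn_puriRubinProjection_mul
    (intervalIntegral.intervalIntegrable_rpow' hq) t
  have split (s : ℝ) : puriRubinProjection s t * contaminationScore r s =
      r * (puriRubinProjection s t * s ^ (r - 1)) - puriRubinProjection s t * s ^ (0 : ℝ) := by
    rw [contaminationScore, Real.rpow_zero]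
    ring
  simp only [split]
  rw [integral_sub ((integrable hp).const_mul r) (integrable neg_one_lt_zero),
    integral_const_mul, mul_sub, mul_left_comm, power, const, sub_add_cancel,
    show r - 1 + 2 = r + 1 by ring]
  field_simp
  ring

end Projection

section Maximization

variable {r x a : ℝ}

lemma sub_one_mul_tangent_le_sub_one_mul_rpow (hr : 0 ≤ r) (ha : 0 < a) (hx : 0 ≤ x) :
    (r - 1) * (a ^ r + r * a ^ (r - 1) * (x - a)) ≤ (r - 1) * x ^ r := by
  have bernoulli : (r - 1) * (1 + r * (x / a - 1)) ≤ (r - 1) * (x / a) ^ r := by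
    have hs : -1 ≤ x / a - 1 := by linarith [div_nonneg hx ha.le]
    rcases le_total 1 r with h | h
    · have := one_add_mul_self_le_rpow_one_add hs h
      rw [add_sub_cancel] at this
      exact mul_le_mul_of_nonneg_left this (by linarith)
    · have := rpow_one_add_le_one_add_mul_self hs hr h
      rw [add_sub_cancel] at this
      exact mul_le_mul_of_nonpos_left this (by linarith)
  calc (r - 1) * (a ^ r + r * a ^ (r - 1) * (x - a))
      = a ^ r * ((r - 1) * (1 + r * (x / a - 1))) := by
        rw [Real.rpow_sub_one ha.ne']
        field_simp
    _ ≤ a ^ r * ((r - 1) * (x / a) ^ r) := by gcongr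
    _ = (r - 1) * x ^ r := by
        rw [Real.div_rpow hx ha.le]
        field_simp

lemma sub_one_mul_self_sub_rpow_nonneg (hx : x ∈ Ioc (0 : ℝ) 1) :
    0 ≤ (r - 1) * (x - x ^ r) := by
  rcases le_total 1 r with h | h
  · have := Real.rpow_le_rpow_of_exponent_ge hx.1 hx.2 h
    rw [Real.rpow_one] at this
    exact mul_nonneg (sub_nonneg.2 h) (sub_nonneg.2 this)
  · have := Real.rpow_le_rpow_of_exponent_ge hx.1 hx.2 h
    rw [Real.rpow_one] at this
    exact mul_nonneg_of_nonpos_of_nonpos (sub_nonpos.2 h) (sub_nonpos.2 this)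

lemma rpowUnitSlopePoint_mem_Ioo (hr : 0 < r) (hr1 : r ≠ 1) :
    rpowUnitSlopePoint r ∈ Ioo (0 : ℝ) 1 := by
  refine ⟨Real.rpow_pos_of_pos hr _, ?_⟩
  rcases hr1.lt_or_gt with h | h
  · exact Real.rpow_lt_one hr.le h (neg_pos.2 (one_div_neg.2 (sub_neg.2 h)))
  · exact Real.rpow_lt_one_of_one_lt_of_neg h (neg_neg_of_pos (one_div_pos.2 (sub_pos.2 h)))

lemma rpowUnitSlopePoint_rpow (hr : 0 ≤ r) :
    rpowUnitSlopePoint r ^ r = r ^ (-(r / (r - 1))) := by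
  rw [rpowUnitSlopePoint, ← Real.rpow_mul hr]
  ring_nf

lemma mul_rpowUnitSlopePoint_rpow_sub_one (hr : 0 < r) (hr1 : r ≠ 1) :
    r * rpowUnitSlopePoint r ^ (r - 1) = 1 := by
  rw [rpowUnitSlopePoint, ← Real.rpow_mul hr.le, neg_mul, one_div_mul_cancel (sub_ne_zero.2 hr1),
    Real.rpow_neg_one, mul_inv_cancel₀ hr.ne']

lemma isGreatest_sub_one_mul_self_sub_rpow (hr : 0 < r) (hr1 : r ≠ 1) :
    IsGreatest ((fun t : ℝ => (r - 1) * (t - t ^ r)) '' Ioo 0 1)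
      ((r - 1) ^ 2 * r ^ (-(r / (r - 1)))) := by
  set a := rpowUnitSlopePoint r
  have ha : a ∈ Ioo (0 : ℝ) 1 := rpowUnitSlopePoint_mem_Ioo hr hr1
  have slope : r * a ^ (r - 1) = 1 := mul_rpowUnitSlopePoint_rpow_sub_one hr hr1
  have a_eq : a = r * a ^ r := by
    rw [← sub_add_cancel r 1, Real.rpow_add_one ha.1.ne', sub_add_cancel, ← mul_assoc, slope,
      one_mul]
  have value : (r - 1) * (a - a ^ r) = (r - 1) ^ 2 * r ^ (-(r / (r - 1))) := by
    rw [← rpowUnitSlopePoint_rpow hr.le]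
    linear_combination (r - 1) * a_eq
  rw [← value]
  refine ⟨mem_image_of_mem _ ha, ?_⟩
  rintro _ ⟨t, ht, rfl⟩
  have tangent := sub_one_mul_tangent_le_sub_one_mul_rpow hr.le ha.1 ht.1.le
  rw [slope] at tangent
  linarith

end Maximization

theorem sup_projection_contamination_general {r : ℝ} (hr : 0 < r) (hr1 : r ≠ 1) :
    IsGreatest ((fun t : ℝ =>
        |2 * ∫ s in Ioo (0 : ℝ) 1, puriRubinProjection s t * contaminationScore r s|) '' Ioo 0 1)
      ((r - 1) ^ 2 / (r + 1) * r ^ (-(r / (r - 1)))) := by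
  have hr' : 0 ≤ (r + 1)⁻¹ := by positivity
  have closed_form : EqOn
      (fun t : ℝ => |2 * ∫ s in Ioo (0 : ℝ) 1, puriRubinProjection s t * contaminationScore r s|)
      (fun t => (r + 1)⁻¹ * ((r - 1) * (t - t ^ r))) (Ioo 0 1) := by
    intro t ht
    have ht' := Ioo_subset_Ioc_self ht
    simp only [two_mul_integral_puriRubinProjection_mul_contaminationScore hr ht']
    exact abs_of_nonneg (mul_nonneg hr' (sub_one_mul_self_sub_rpow_nonneg ht'))
  have scaled := (monotone_mul_left_of_nonneg hr').map_isGreatest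
    (isGreatest_sub_one_mul_self_sub_rpow hr hr1)
  rw [image_image] at scaled
  rw [closed_form.image_eq, div_mul_eq_mul_div, div_eq_inv_mul]
  exact scaled

/-- For `r > 1`, with `h(x) = r x^{r−1} − 1` and
`ξ_PR(s;t) = 1{s < t}(1/2 − s/t) + s·t − t/2`,
`sup_{t∈(0,1)} |2 ∫₀¹ ξ_PR(s;t) h(s) ds| = ((r−1)²/(r+1)) · r^{−r/(r−1)}`. -/
theorem sup_projection_contamination (r : ℝ) (hr : 1 < r) :
    sSup ((fun t : ℝ =>
        |2 * ∫ s in Ioo (0 : ℝ) 1,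
            ((if s < t then (1 : ℝ) else 0) * (1 / 2 - s / t) + s * t - t / 2)
              * (r * s ^ (r - 1) - 1)|) '' Ioo 0 1)
      = ((r - 1) ^ 2 / (r + 1)) * r ^ (-(r / (r - 1))) :=
  (sup_projection_contamination_general (zero_lt_one.trans hr) hr.ne').csSup_eq
end

section
/- The function f(r) = 27·(2r−1)·r² / ( 5·(r+1)⁴ ) on the interval (1, ∞) attains its maximum at the unique point r* = 2 + √3, i.e. f(r) ≤ f(2+√3) for all r > 1; moreover f(2+√3) < 1. -/
/-!
In the variable `x = 1 / (r + 1)` the efficiency is `27 / 5` times the quartic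
`p(x) = x (2 - 3 x) (1 - x) ^ 2`, with `p'(x) = 2 (1 - x) (6 x ^ 2 - 6 x + 1)`. At the critical
point `a = (3 - √3) / 6`, which corresponds to `r = 2 + √3`, the difference `p(a) - p(x)` is
`(x - a) ^ 2` times a quadratic of discriminant `4 (1 - √3) < 0`, so `a` is the unique global
maximizer of `p` on the whole line.
-/

/-- The local Bahadur efficiency of the integral-type test against the contamination alternative
`(1 - θ) x + θ x ^ r`, as a function of `r`. It has a pole at `r = -1`, where division by zero
gives the value `0`. -/
noncomputable def contaminationEfficiency (r : ℝ) : ℝ :=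
  27 * (2 * r - 1) * r ^ 2 / (5 * (r + 1) ^ 4)

/-- The quartic that gives the local Bahadur efficiency, up to the factor `27 / 5`, in the
variable `x = 1 / (r + 1)`. -/
def efficiencyQuartic (x : ℝ) : ℝ :=
  x * (2 - 3 * x) * (1 - x) ^ 2

lemma contaminationEfficiency_eq_efficiencyQuartic_inv {r : ℝ} (hr : r ≠ -1) :
    contaminationEfficiency r = 27 / 5 * efficiencyQuartic (r + 1)⁻¹ := by
  have hr' : r + 1 ≠ 0 := mt eq_neg_of_add_eq_zero_left hr
  unfold contaminationEfficiency efficiencyQuartic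
  field_simp
  ring

lemma efficiencyQuartic_eq_sub (x : ℝ) :
    efficiencyQuartic x = (3 + 2 * √3) / 36 -
      (x - (3 - √3) / 6) ^ 2 * (3 * (x - (5 + √3) / 6) ^ 2 + (√3 - 1) / 3) := by
  have sqrt_three_sq : √3 ^ 2 = 3 := Real.sq_sqrt (by norm_num)
  unfold efficiencyQuartic
  linear_combination
    (√3 ^ 2 / 432 + √3 / 54 + (x - 1 / 2) * (3 / 2 - x) / 6 + 1 / 144) * sqrt_three_sq

lemma efficiencyQuartic_three_sub_sqrt_three_div_six :
    efficiencyQuartic ((3 - √3) / 6) = (3 + 2 * √3) / 36 := by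
  rw [efficiencyQuartic_eq_sub]
  ring

lemma efficiencyQuartic_lt {x : ℝ} (hx : x ≠ (3 - √3) / 6) :
    efficiencyQuartic x < efficiencyQuartic ((3 - √3) / 6) := by
  have sq_pos : 0 < (x - (3 - √3) / 6) ^ 2 := sq_pos_of_ne_zero (sub_ne_zero.2 hx)
  have one_lt_sqrt_three : 1 < √3 := Real.lt_sqrt_of_sq_lt (by norm_num)
  have quadratic_pos : 0 < 3 * (x - (5 + √3) / 6) ^ 2 + (√3 - 1) / 3 := by
    have := sub_pos.2 one_lt_sqrt_three
    positivity
  rw [efficiencyQuartic_three_sub_sqrt_three_div_six, efficiencyQuartic_eq_sub]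
  exact sub_lt_self _ (mul_pos sq_pos quadratic_pos)

lemma inv_two_add_sqrt_three_add_one : (2 + √3 + 1)⁻¹ = (3 - √3) / 6 := by
  have sqrt_three_sq : √3 ^ 2 = 3 := Real.sq_sqrt (by norm_num)
  apply inv_eq_of_mul_eq_one_right
  linear_combination -sqrt_three_sq / 6

lemma contaminationEfficiency_two_add_sqrt_three :
    contaminationEfficiency (2 + √3) = 27 / 5 * efficiencyQuartic ((3 - √3) / 6) := by
  have ne_neg_one : 2 + √3 ≠ -1 := (neg_one_lt_zero.trans (by positivity)).ne'
  rw [contaminationEfficiency_eq_efficiencyQuartic_inv ne_neg_one, inv_two_add_sqrt_three_add_one]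

lemma contaminationEfficiency_lt {r : ℝ} (hr : r ≠ -1) (hne : r ≠ 2 + √3) :
    contaminationEfficiency r < contaminationEfficiency (2 + √3) := by
  have inv_ne : (r + 1)⁻¹ ≠ (3 - √3) / 6 := by
    rw [← inv_two_add_sqrt_three_add_one]
    exact inv_injective.ne ((add_left_injective 1).ne hne)
  rw [contaminationEfficiency_eq_efficiencyQuartic_inv hr,
    contaminationEfficiency_two_add_sqrt_three]
  gcongr
  exact efficiencyQuartic_lt inv_ne

lemma contaminationEfficiency_two_add_sqrt_three_lt_one :
    contaminationEfficiency (2 + √3) < 1 := by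
  have sqrt_three_lt : √3 < 11 / 6 := (Real.sqrt_lt' (by norm_num)).2 (by norm_num)
  rw [contaminationEfficiency_two_add_sqrt_three, efficiencyQuartic_three_sub_sqrt_three_div_six]
  linarith

theorem efficiency_contamination_max_general :
    (∀ r ≠ (-1 : ℝ), contaminationEfficiency r ≤ contaminationEfficiency (2 + √3)) ∧
    (∀ r ≠ (-1 : ℝ), r ≠ 2 + √3 →
      contaminationEfficiency r < contaminationEfficiency (2 + √3)) ∧
    contaminationEfficiency (2 + √3) < 1 := by
  refine ⟨fun r hr => ?_, fun r hr hne => contaminationEfficiency_lt hr hne,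
    contaminationEfficiency_two_add_sqrt_three_lt_one⟩
  rcases eq_or_ne r (2 + √3) with rfl | hne
  · exact le_rfl
  · exact (contaminationEfficiency_lt hr hne).le

/-- The local Bahadur efficiency `f(r) = 27(2r−1)r²/(5(r+1)⁴)` of the integral-type
test against the contamination alternative attains its maximum on `(1, ∞)` at the
unique point `r* = 2 + √3`, and `f(2 + √3) < 1`. -/
theorem efficiency_contamination_max :
    let f : ℝ → ℝ := fun r => 27 * (2 * r - 1) * r ^ 2 / (5 * (r + 1) ^ 4)
    (∀ r > (1 : ℝ), f r ≤ f (2 + Real.sqrt 3)) ∧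
    (∀ r > (1 : ℝ), r ≠ 2 + Real.sqrt 3 → f r < f (2 + Real.sqrt 3)) ∧
    f (2 + Real.sqrt 3) < 1 := by
  obtain ⟨le_max, lt_max, max_lt_one⟩ := efficiency_contamination_max_general
  exact ⟨fun r hr => le_max r (by linarith), fun r hr => lt_max r (by linarith), max_lt_one⟩
end
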